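/- Assume the sub-critical range q > 1 and (2/3)q + 1 < p < q + 2/3. Then there is a constant C depending only on p and q such that for every f ∈ W^{(3p−2)/q−1,q}(ℝ/ℤ,ℝⁿ): ∭_{ℝ/ℤ×D} |(f(u+w)−f(u))/w − (f(u+v)−f(u))/v|^q / (|w|^{p−q} |v|^{p−q} |v−w|^p) dw dv du ≤ C ‖f‖^q_{W^{(3p−2)/q−1,q}}. -/

import Mathlib

open MeasureTheory Set Filter Topology
open scoped ENNReal

noncomputable section

/-- The area `|a ∧ b|` of the parallelogram spanned by `a, b ∈ ℝⁿ`. -/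
def wedgeNorm {n : ℕ} (a b : EuclideanSpace ℝ (Fin n)) : ℝ :=
  Real.sqrt (‖a‖ ^ 2 * ‖b‖ ^ 2 - (inner ℝ a b : ℝ) ^ 2)

/-- `1 / R^{p,q}(x,y,z) = |(y-x) ∧ (z-x)|^q / (|y-z| |y-x| |z-x|)^p`. -/
def invR {n : ℕ} (p q : ℝ) (x y z : EuclideanSpace ℝ (Fin n)) : ℝ :=
  wedgeNorm (y - x) (z - x) ^ q / (‖y - z‖ * ‖y - x‖ * ‖z - x‖) ^ p

/-- The generalized integral Menger curvature `E_{p,q}` of a closed curve,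
modelled by a `1`-periodic function together with its derivative,
the parameter domain `ℝ/ℤ` being represented by `[0,1)`; values in `[0,∞]`. -/
def menger {n : ℕ} (p q : ℝ) (γ γ' : ℝ → EuclideanSpace ℝ (Fin n)) : ℝ≥0∞ :=
  ∫⁻ u₁ in Ico (0:ℝ) 1, ∫⁻ u₂ in Ico (0:ℝ) 1, ∫⁻ u₃ in Ico (0:ℝ) 1,
    ENNReal.ofReal (‖γ' u₁‖ * ‖γ' u₂‖ * ‖γ' u₃‖ * invR p q (γ u₁) (γ u₂) (γ u₃))

/-- Injectivity of a `1`-periodic curve as a map on `ℝ/ℤ`. -/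
def InjCircle {n : ℕ} (γ : ℝ → EuclideanSpace ℝ (Fin n)) : Prop :=
  ∀ u v : ℝ, γ u = γ v → ∃ k : ℤ, v = u + k

/-- Distance on `ℝ/ℤ`. -/
def circleDist (u v : ℝ) : ℝ := ⨅ k : ℤ, |u - v - (k : ℝ)|

/-- The `ρ`-th power of the Sobolev–Slobodeckiĭ seminorm `[f]_{W^{1+s,ρ}}`
of a periodic function with derivative `f'`; values in `[0,∞]`. -/
def sobSemiPow {n : ℕ} (s ρ : ℝ) (f' : ℝ → EuclideanSpace ℝ (Fin n)) : ℝ≥0∞ :=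
  ∫⁻ u in Ico (0:ℝ) 1, ∫⁻ w in Icc (-(1/2) : ℝ) (1/2),
    ENNReal.ofReal (‖f' (u + w) - f' u‖ ^ ρ / |w| ^ (1 + ρ * s))

/-- The norm `‖f‖_{W^{1+s,ρ}} = ‖f‖_{W^{1,ρ}} + [f]_{W^{1+s,ρ}}`. -/
def sobNorm {n : ℕ} (s ρ : ℝ) (f f' : ℝ → EuclideanSpace ℝ (Fin n)) : ℝ :=
  (∫ u in Ico (0:ℝ) 1, ‖f u‖ ^ ρ) ^ (1/ρ) + (∫ u in Ico (0:ℝ) 1, ‖f' u‖ ^ ρ) ^ (1/ρ)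
    + (sobSemiPow s ρ f').toReal ^ (1/ρ)

/-- `γ` is a closed `W^{1,1}` curve with weak derivative `γ'`:
both are `1`-periodic, `γ'` is measurable and `γ` is the primitive of `γ'`. -/
structure CurvePair {n : ℕ} (γ γ' : ℝ → EuclideanSpace ℝ (Fin n)) : Prop where
  periodic : Function.Periodic γ 1
  periodic' : Function.Periodic γ' 1
  meas' : Measurable γ'
  primitive : ∀ u, γ u = γ 0 + ∫ t in (0:ℝ)..u, γ' t

/-- The range of integration `D ⊆ (-1/2,0) × (0,1/2)`. -/
def domainD : Set (ℝ × ℝ) :=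
  {x | x.1 ∈ Set.Ioo (-(1/2) : ℝ) 0 ∧ x.2 ∈ Set.Ioo (0 : ℝ) (1/2) ∧
    x.2 ≤ 1 + 2 * x.1 ∧ -1 + 2 * x.2 ≤ x.1}

/-- Scaling of a Lebesgue integral over an interval starting at the origin. -/
lemma setLIntegral_Ioo_comp_mul_left {c : ℝ} (hc : 0 < c) (b : ℝ) (φ : ℝ → ℝ≥0∞) :
    ∫⁻ x in Ioo 0 b, φ (c * x) = ENNReal.ofReal c⁻¹ * ∫⁻ x in Ioo 0 (c * b), φ x := by
  rw [← lintegral_indicator measurableSet_Ioo, ← lintegral_indicator measurableSet_Ioo]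
  have hmap := Real.map_volume_mul_left hc.ne'
  have hind : (Ioo 0 b).indicator (fun x => φ (c * x))
      = fun x => (Ioo 0 (c * b)).indicator φ (c * x) := by
    funext x
    simp only [indicator, mem_Ioo, mul_pos_iff_of_pos_left hc, mul_lt_mul_iff_right₀ hc]
  rw [hind, ← abs_of_pos (inv_pos.2 hc), ← smul_eq_mul (a := ENNReal.ofReal _), ← lintegral_smul_measure, ← hmap,
    (measurableEmbedding_mulLeft₀ hc.ne').lintegral_map]

/-- The integral of a periodic function over a period is translation invariant. -/
lemma Function.Periodic.setLIntegral_Ico_comp_add {φ : ℝ → ℝ≥0∞} (hφ : Function.Periodic φ 1)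
    (c : ℝ) : ∫⁻ u in Ico (0 : ℝ) 1, φ (u + c) = ∫⁻ u in Ico (0 : ℝ) 1, φ u := by
  have hshift : ∫⁻ u in Ioc (0 : ℝ) 1, φ (u + c) = ∫⁻ u in Ioc c (c + 1), φ u := by
    have h := (measurePreserving_add_right volume c).setLIntegral_comp_emb
      (measurableEmbedding_addRight c) φ (Ioc (0 : ℝ) 1)
    rw [h]
    simp [add_comm]
  have hdom := (isAddFundamentalDomain_Ioc one_pos c).setLIntegral_eq
    (isAddFundamentalDomain_Ioc one_pos 0) φ hφ.map_vadd_zmultiples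
  rw [zero_add] at hdom
  rw [setLIntegral_congr (Ico_ae_eq_Ioc (μ := volume)), hshift, hdom,
    setLIntegral_congr (Ico_ae_eq_Ioc (μ := volume))]

/-- Finiteness of Euler's beta integral, in `ℝ≥0∞`. -/
lemma lintegral_beta_lt_top {β : ℝ} (hβ : β < 1) :
    ∫⁻ x in Ioo (0 : ℝ) 1, ENNReal.ofReal (x ^ (-β) * (1 - x) ^ (-β)) < ⊤ := by
  have hpos : 0 < 1 - β := by linarith
  have hb := ProbabilityTheory.beta_pos hpos hpos
  have h := ProbabilityTheory.lintegral_betaPDF_eq_one hpos hpos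
  rw [ProbabilityTheory.lintegral_betaPDF] at h
  simp_rw [mul_assoc, sub_sub_cancel_left, ENNReal.ofReal_mul (one_div_pos.2 hb).le] at h
  rw [lintegral_const_mul _ (by fun_prop)] at h
  refine lt_top_iff_ne_top.2 fun htop => ?_
  rw [htop, ENNReal.mul_top (by simpa using hb)] at h
  exact ENNReal.top_ne_one h

/-- Jensen's inequality for the norm of an integral over the unit interval. -/
lemma enorm_integral_rpow_le {E : Type*} [NormedAddCommGroup E] [NormedSpace ℝ E]
    {q : ℝ} (hq : 1 ≤ q) {g : ℝ → E} (hg : AEStronglyMeasurable g (volume.restrict (Ioo 0 1))) :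
    ‖∫ θ in Ioo (0 : ℝ) 1, g θ‖ₑ ^ q ≤ ∫⁻ θ in Ioo (0 : ℝ) 1, ‖g θ‖ₑ ^ q := by
  have : IsProbabilityMeasure (volume.restrict (Ioo (0 : ℝ) 1)) := ⟨by simp⟩
  have h := eLpNorm'_le_eLpNorm'_of_exponent_le one_pos hq _ hg
  have hq0 : 0 < q := by linarith
  simp only [eLpNorm', ENNReal.rpow_one, ne_eq, one_ne_zero, not_false_eq_true, div_self] at h
  calc _ ≤ (∫⁻ θ in Ioo (0 : ℝ) 1, ‖g θ‖ₑ) ^ q :=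
        ENNReal.rpow_le_rpow (enorm_integral_le_lintegral_enorm _) hq0.le
    _ ≤ ((∫⁻ θ in Ioo (0 : ℝ) 1, ‖g θ‖ₑ ^ q) ^ (1 / q)) ^ q := ENNReal.rpow_le_rpow h hq0.le
    _ = _ := by rw [← ENNReal.rpow_mul, one_div_mul_cancel hq0.ne', ENNReal.rpow_one]

/-- The `q`-th power of the `L^q` modulus of continuity of a function on `ℝ/ℤ`. -/
def diffModulus {n : ℕ} (q : ℝ) (g : ℝ → EuclideanSpace ℝ (Fin n)) (t : ℝ) : ℝ≥0∞ :=
  ∫⁻ u in Ico (0 : ℝ) 1, ‖g (u + t) - g u‖ₑ ^ q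

lemma measurable_diffModulus {n : ℕ} (q : ℝ) {g : ℝ → EuclideanSpace ℝ (Fin n)}
    (hg : Measurable g) : Measurable (diffModulus q g) := by
  unfold diffModulus
  exact Measurable.lintegral_prod_right' (f := fun x : ℝ × ℝ => ‖g (x.2 + x.1) - g x.2‖ₑ ^ q)
    (by fun_prop)

lemma lintegral_sub_rpow_eq_diffModulus {n : ℕ} (q : ℝ) {g : ℝ → EuclideanSpace ℝ (Fin n)}
    (hg : Function.Periodic g 1) (t s : ℝ) :
    ∫⁻ u in Ico (0 : ℝ) 1, ‖g (u + t) - g (u + s)‖ₑ ^ q = diffModulus q g (t - s) := by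
  have hper : Function.Periodic (fun u => ‖g (u + (t - s)) - g u‖ₑ ^ q) 1 := fun u => by
    simp only [hg u, add_right_comm u 1, hg (u + (t - s))]
  rw [diffModulus, ← hper.setLIntegral_Ico_comp_add s]
  refine lintegral_congr fun u => ?_
  rw [add_assoc, add_sub_cancel]

lemma diffModulus_sub_one {n : ℕ} (q : ℝ) {g : ℝ → EuclideanSpace ℝ (Fin n)}
    (hg : Function.Periodic g 1) (t : ℝ) : diffModulus q g (t - 1) = diffModulus q g t := by
  simp only [diffModulus, ← add_sub_assoc, hg.sub_eq]

lemma ofReal_norm_rpow_div {n : ℕ} {q : ℝ} (hq : 0 ≤ q) (x : EuclideanSpace ℝ (Fin n)) (d : ℝ) :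
    ENNReal.ofReal (‖x‖ ^ q / d) = ENNReal.ofReal d⁻¹ * ‖x‖ₑ ^ q := by
  rw [div_eq_inv_mul, ENNReal.ofReal_mul' (by positivity),
    ← ENNReal.ofReal_rpow_of_nonneg (norm_nonneg x) hq, ofReal_norm]

lemma sobSemiPow_eq_lintegral_diffModulus {n : ℕ} (s : ℝ) {q : ℝ} (hq : 0 ≤ q)
    {g : ℝ → EuclideanSpace ℝ (Fin n)} (hg : Measurable g) :
    sobSemiPow s q g = ∫⁻ w in Icc (-(1/2) : ℝ) (1/2),
      ENNReal.ofReal (|w| ^ (-(1 + q * s))) * diffModulus q g w := by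
  simp only [sobSemiPow, ofReal_norm_rpow_div hq, ← Real.rpow_neg (abs_nonneg _)]
  rw [lintegral_lintegral_swap (by fun_prop)]
  refine lintegral_congr fun w => ?_
  rw [lintegral_const_mul _ (by fun_prop), diffModulus]

/-- By periodicity, the modulus of continuity at offsets up to `3/4` is controlled by the
seminorm, which only sees offsets up to `1/2`. -/
lemma lintegral_rpow_mul_diffModulus_le {n : ℕ} {s q : ℝ} (hq : 0 ≤ q) (hs : 0 ≤ 1 + q * s)
    {g : ℝ → EuclideanSpace ℝ (Fin n)} (hg : Measurable g) (hper : Function.Periodic g 1) :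
    ∫⁻ r in Ioo (0 : ℝ) (3/4), ENNReal.ofReal (r ^ (-(1 + q * s))) * diffModulus q g r
      ≤ sobSemiPow s q g := by
  set ψ : ℝ → ℝ≥0∞ := fun w => ENNReal.ofReal (|w| ^ (-(1 + q * s))) * diffModulus q g w with hψ
  have hsub : Ioo (0 : ℝ) (3/4) ⊆ Ioc 0 (1/2) ∪ Ioo (1/2) (3/4) := fun x hx => by
    rcases le_or_gt x (1/2) with h | h
    · exact Or.inl ⟨hx.1, h⟩
    · exact Or.inr ⟨h, hx.2⟩
  have hshift : ∫⁻ r in Ioo (1/2 : ℝ) (3/4), ψ (r - 1) = ∫⁻ w in Ioo (-(1/2) : ℝ) (-(1/4)), ψ w := by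
    rw [← (measurePreserving_sub_right volume (1 : ℝ)).setLIntegral_comp_preimage_emb
      (MeasurableEquiv.subRight (1 : ℝ)).measurableEmbedding ψ (Ioo (-(1/2)) (-(1/4)))]
    norm_num
  have hdisj : Disjoint (Ioc (0 : ℝ) (1/2)) (Ioo (-(1/2)) (-(1/4))) :=
    Set.disjoint_left.2 fun x hx hx' => by linarith [hx.1, hx'.2]
  calc _ ≤ (∫⁻ r in Ioc (0 : ℝ) (1/2), ENNReal.ofReal (r ^ (-(1 + q * s))) * diffModulus q g r)
        + ∫⁻ r in Ioo (1/2 : ℝ) (3/4), ENNReal.ofReal (r ^ (-(1 + q * s))) * diffModulus q g r :=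
        (lintegral_mono_set hsub).trans (lintegral_union_le _ _ _)
    _ ≤ (∫⁻ r in Ioc (0 : ℝ) (1/2), ψ r) + ∫⁻ r in Ioo (1/2 : ℝ) (3/4), ψ (r - 1) := by
        refine add_le_add (setLIntegral_mono' measurableSet_Ioc fun r hr => ?_)
          (setLIntegral_mono' measurableSet_Ioo fun r hr => ?_)
        · simp only [hψ, abs_of_pos hr.1, le_refl]
        · simp only [hψ, diffModulus_sub_one q hper]
          have h1 : |r - 1| = 1 - r := by rw [abs_of_neg] <;> linarith [hr.2]
          rw [h1]
          gcongr ENNReal.ofReal ?_ * _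
          exact Real.rpow_le_rpow_of_nonpos (by linarith [hr.2]) (by linarith [hr.1])
            (by linarith)
    _ = ∫⁻ w in Ioc (0 : ℝ) (1/2) ∪ Ioo (-(1/2)) (-(1/4)), ψ w := by
        rw [hshift, lintegral_union measurableSet_Ioo hdisj]
    _ ≤ ∫⁻ w in Icc (-(1/2) : ℝ) (1/2), ψ w := by
        refine lintegral_mono_set (union_subset (fun x hx => ?_) fun x hx => ?_)
        · exact ⟨by linarith [hx.1], hx.2⟩
        · exact ⟨hx.1.le, by linarith [hx.2]⟩
    _ = _ := (sobSemiPow_eq_lintegral_diffModulus s hq hg).symm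

lemma ENNReal.le_one_add_rpow {q : ℝ} (hq : 1 ≤ q) (x : ℝ≥0∞) : x ≤ 1 + x ^ q := by
  rcases le_total x 1 with h | h
  · exact h.trans le_self_add
  · calc x = x ^ (1 : ℝ) := (ENNReal.rpow_one x).symm
      _ ≤ x ^ q := ENNReal.rpow_le_rpow_of_exponent_le h hq
      _ ≤ 1 + x ^ q := le_add_self

lemma intervalIntegrable_of_sobSemiPow_lt_top {n : ℕ} {s q : ℝ} (hq : 1 ≤ q)
    (hs : 0 ≤ 1 + q * s) {g : ℝ → EuclideanSpace ℝ (Fin n)} (hg : Measurable g)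
    (hper : Function.Periodic g 1) (hfin : sobSemiPow s q g < ⊤) (a b : ℝ) :
    IntervalIntegrable g volume a b := by
  have hq0 : 0 ≤ q := by linarith
  simp only [sobSemiPow, ofReal_norm_rpow_div hq0, ← Real.rpow_neg (abs_nonneg _)] at hfin
  have hmeas : Measurable fun u => ∫⁻ w in Icc (-(1/2) : ℝ) (1/2),
      ENNReal.ofReal (|w| ^ (-(1 + q * s))) * ‖g (u + w) - g u‖ₑ ^ q :=
    Measurable.lintegral_prod_right' (f := fun x : ℝ × ℝ =>
      ENNReal.ofReal (|x.2| ^ (-(1 + q * s))) * ‖g (x.1 + x.2) - g x.1‖ₑ ^ q) (by fun_prop)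
  have hne : (ae (volume.restrict (Ico (0 : ℝ) 1))).NeBot := ae_neBot.2 (by simp)
  obtain ⟨u, hu⟩ := (ae_lt_top hmeas hfin.ne).exists
  have hloc : IntegrableOn (fun w => g (u + w) - g u) (Icc (-(1/2) : ℝ) (1/2)) := by
    refine ⟨Measurable.aestronglyMeasurable (by fun_prop), ?_⟩
    calc ∫⁻ w in Icc (-(1/2) : ℝ) (1/2), ‖g (u + w) - g u‖ₑ
        ≤ ∫⁻ w in Icc (-(1/2) : ℝ) (1/2),
          (1 + ENNReal.ofReal (|w| ^ (-(1 + q * s))) * ‖g (u + w) - g u‖ₑ ^ q) := by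
          refine lintegral_mono_ae ?_
          filter_upwards [ae_restrict_mem measurableSet_Icc,
            ae_restrict_of_ae (Measure.ae_ne volume (0 : ℝ))] with w hw hw0
          refine (ENNReal.le_one_add_rpow hq _).trans ?_
          gcongr
          refine le_mul_of_one_le_left' (ENNReal.one_le_ofReal.2 ?_)
          exact Real.one_le_rpow_of_pos_of_le_one_of_nonpos (abs_pos.2 hw0)
            (by rw [abs_le]; constructor <;> linarith [hw.1, hw.2]) (by linarith)
      _ < ⊤ := by
          rw [lintegral_add_left measurable_const]
          exact ENNReal.add_lt_top.2 ⟨by simp, hu⟩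
  have hloc' : IntervalIntegrable (fun w => g (u + w)) volume (-(1/2)) (1/2) := by
    rw [intervalIntegrable_iff_integrableOn_Icc_of_le (by norm_num)]
    have hadd := hloc.add (integrableOn_const (C := g u) (by simp))
    exact hadd.congr_fun (fun w _ => by simp) measurableSet_Icc
  refine hper.intervalIntegrable one_ne_zero (t := -(1/2) - -u) ?_ a b
  have hshift := hloc'.comp_add_left (-u)
  simp only [add_neg_cancel_left] at hshift
  rwa [show (1/2 - -u : ℝ) = -(1/2) - -u + 1 by ring] at hshift

/-- Difference quotients of a primitive are averages of the derivative. -/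
lemma CurvePair.inv_smul_sub_eq_integral {n : ℕ} {f f' : ℝ → EuclideanSpace ℝ (Fin n)}
    (h : CurvePair f f') (hloc : ∀ a b, IntervalIntegrable f' volume a b) (u : ℝ) {w : ℝ}
    (hw : w ≠ 0) : w⁻¹ • (f (u + w) - f u) = ∫ θ in Ioo (0 : ℝ) 1, f' (u + w * θ) := by
  rw [← integral_Ioc_eq_integral_Ioo, ← intervalIntegral.integral_of_le zero_le_one,
    intervalIntegral.integral_comp_add_mul _ hw, mul_zero, mul_one, add_zero,
    h.primitive (u + w), h.primitive u, add_sub_add_left_eq_sub,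
    intervalIntegral.integral_interval_sub_left (hloc _ _) (hloc _ _)]

lemma integrableOn_comp_add_mul {E : Type*} [NormedAddCommGroup E] {g : ℝ → E}
    (hloc : ∀ a b, IntervalIntegrable g volume a b) (u w : ℝ) :
    IntegrableOn (fun θ => g (u + w * θ)) (Ioo (0 : ℝ) 1) := by
  rcases eq_or_ne w 0 with rfl | hw
  · simp
  have h := ((hloc u (u + w)).comp_add_left u).comp_mul_left (c := w)
  rw [sub_self, zero_div, add_sub_cancel_left, div_self hw,
    intervalIntegrable_iff_integrableOn_Ioo_of_le zero_le_one] at h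
  exact h

lemma lintegral_rpow_mul_average_le {a : ℝ} (ha : 1 ≤ a) (b : ℝ) {H : ℝ → ℝ≥0∞}
    (hH : Measurable H) :
    ∫⁻ t in Ioo 0 b, ENNReal.ofReal (t ^ (-a)) * ∫⁻ θ in Ioo (0 : ℝ) 1, H (θ * t)
      ≤ ∫⁻ r in Ioo 0 b, ENNReal.ofReal (r ^ (-a)) * H r := by
  have hpull (t : ℝ) : ENNReal.ofReal (t ^ (-a)) * ∫⁻ θ in Ioo (0 : ℝ) 1, H (θ * t)
      = ∫⁻ θ in Ioo (0 : ℝ) 1, ENNReal.ofReal (t ^ (-a)) * H (θ * t) :=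
    (lintegral_const_mul _ (by fun_prop)).symm
  simp only [hpull]
  rw [lintegral_lintegral_swap (by fun_prop)]
  have hscale (θ : ℝ) (hθ : θ ∈ Ioo (0 : ℝ) 1) :
      ∫⁻ t in Ioo 0 b, ENNReal.ofReal (t ^ (-a)) * H (θ * t)
        ≤ ∫⁻ r in Ioo 0 b, ENNReal.ofReal (r ^ (-a)) * H r := by
    have hcongr : ∫⁻ t in Ioo 0 b, ENNReal.ofReal (t ^ (-a)) * H (θ * t)
        = ∫⁻ t in Ioo 0 b,
          ENNReal.ofReal (θ ^ a) * (ENNReal.ofReal ((θ * t) ^ (-a)) * H (θ * t)) := by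
      refine setLIntegral_congr_fun measurableSet_Ioo fun t ht => ?_
      have hmul : t ^ (-a) = θ ^ a * (θ * t) ^ (-a) := by
        rw [Real.mul_rpow hθ.1.le ht.1.le, ← mul_assoc, ← Real.rpow_add hθ.1, add_neg_cancel,
          Real.rpow_zero, one_mul]
      simp only [hmul, ENNReal.ofReal_mul (Real.rpow_nonneg hθ.1.le a), mul_assoc]
    rw [hcongr, lintegral_const_mul _ (by fun_prop),
      setLIntegral_Ioo_comp_mul_left hθ.1 b fun r => ENNReal.ofReal (r ^ (-a)) * H r,
      ← mul_assoc, ← ENNReal.ofReal_mul (Real.rpow_nonneg hθ.1.le a), ← Real.rpow_neg_one,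
      ← Real.rpow_add hθ.1]
    rcases le_or_gt b 0 with hb | hb
    · simp [Ioo_eq_empty (not_lt.2 (mul_nonpos_of_nonneg_of_nonpos hθ.1.le hb))]
    refine mul_le_of_le_one_of_le (ENNReal.ofReal_le_one.2 ?_) (lintegral_mono_set ?_)
    · exact Real.rpow_le_one hθ.1.le hθ.2.le (by linarith)
    · exact Ioo_subset_Ioo_right (mul_le_of_le_one_left hb.le hθ.2.le)
  calc _ ≤ ∫⁻ _θ in Ioo (0 : ℝ) 1, ∫⁻ r in Ioo 0 b, ENNReal.ofReal (r ^ (-a)) * H r :=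
        setLIntegral_mono' measurableSet_Ioo hscale
    _ = _ := by simp

lemma lintegral_Ioo_rpow_mul_rpow_sub {t : ℝ} (ht : 0 < t) (β p : ℝ) :
    ∫⁻ w in Ioo 0 t, ENNReal.ofReal (w ^ (-β) * (t - w) ^ (-β) * t ^ (-p))
      = (∫⁻ x in Ioo (0 : ℝ) 1, ENNReal.ofReal (x ^ (-β) * (1 - x) ^ (-β)))
        * ENNReal.ofReal (t ^ (1 - 2 * β - p)) := by
  have h := setLIntegral_Ioo_comp_mul_left ht 1
    fun w => ENNReal.ofReal (w ^ (-β) * (t - w) ^ (-β) * t ^ (-p))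
  rw [mul_one] at h
  have hcongr : ∫⁻ x in Ioo (0 : ℝ) 1,
      ENNReal.ofReal ((t * x) ^ (-β) * (t - t * x) ^ (-β) * t ^ (-p))
      = ENNReal.ofReal (t ^ (-2 * β - p)) *
        ∫⁻ x in Ioo (0 : ℝ) 1, ENNReal.ofReal (x ^ (-β) * (1 - x) ^ (-β)) := by
    rw [← lintegral_const_mul _ (by fun_prop)]
    refine setLIntegral_congr_fun measurableSet_Ioo fun x hx => ?_
    rw [← ENNReal.ofReal_mul (Real.rpow_nonneg ht.le _), Real.mul_rpow ht.le hx.1.le,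
      show t - t * x = t * (1 - x) by ring, Real.mul_rpow ht.le (by linarith [hx.2]),
      show -2 * β - p = -β + -β + -p by ring, Real.rpow_add ht, Real.rpow_add ht]
    congr 1
    ring
  rw [hcongr] at h
  rw [show (1 - 2 * β - p) = 1 + (-2 * β - p) by ring, Real.rpow_add ht, Real.rpow_one,
    ENNReal.ofReal_mul ht.le, mul_left_comm, mul_comm _ (ENNReal.ofReal (t ^ _)), h, ← mul_assoc,
    ← ENNReal.ofReal_mul ht.le, mul_inv_cancel₀ ht.ne', ENNReal.ofReal_one, one_mul]

lemma measurableSet_domainD : MeasurableSet domainD := by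
  unfold domainD
  measurability

/-- Integrating a function of `w - v` against the singular kernel over `D` reduces, in the
coordinates `(w, w - v)`, to a one-dimensional weighted integral. -/
lemma setLIntegral_domainD_le (β p : ℝ) {A : ℝ → ℝ≥0∞} (hA : Measurable A) :
    ∫⁻ x in domainD, ENNReal.ofReal (|x.2| ^ β * |x.1| ^ β * |x.1 - x.2| ^ p)⁻¹ * A (x.2 - x.1)
      ≤ (∫⁻ x in Ioo (0 : ℝ) 1, ENNReal.ofReal (x ^ (-β) * (1 - x) ^ (-β))) *
        ∫⁻ t in Ioo (0 : ℝ) (3/4), ENNReal.ofReal (t ^ (1 - 2 * β - p)) * A t := by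
  set k : ℝ → ℝ → ℝ≥0∞ := fun w t =>
    ENNReal.ofReal (w ^ (-β) * (t - w) ^ (-β) * t ^ (-p)) with hk
  set S : Set (ℝ × ℝ) := {y | (0 < y.1 ∧ y.1 < y.2) ∧ y.2 < 3/4} with hS
  have hSm : MeasurableSet S := by
    rw [hS]
    measurability
  set Ψ : ℝ × ℝ → ℝ≥0∞ := S.indicator fun y => k y.1 y.2 * A y.2 with hΨ
  have hΨm : Measurable Ψ := Measurable.indicator (by fun_prop) hSm
  have hpt (x : ℝ × ℝ) (hx : x ∈ domainD) :
      ENNReal.ofReal (|x.2| ^ β * |x.1| ^ β * |x.1 - x.2| ^ p)⁻¹ * A (x.2 - x.1)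
        = Ψ (x.2, x.2 - x.1) := by
    obtain ⟨⟨_, h1⟩, ⟨h2, _⟩, h3, h4⟩ := hx
    have hmem : (x.2, x.2 - x.1) ∈ S := ⟨⟨h2, by linarith⟩, by linarith⟩
    rw [hΨ, indicator_of_mem hmem]
    simp only [hk, sub_sub_cancel_left, abs_of_pos h2, abs_of_neg h1,
      abs_of_neg (show x.1 - x.2 < 0 by linarith), neg_sub]
    rw [Real.rpow_neg h2.le, Real.rpow_neg (by linarith), Real.rpow_neg (by linarith), mul_inv,
      mul_inv]
  have hinner (t : ℝ) : ∫⁻ w, Ψ (w, t) = (Ioo (0 : ℝ) (3/4)).indicator (fun t =>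
      (∫⁻ x in Ioo (0 : ℝ) 1, ENNReal.ofReal (x ^ (-β) * (1 - x) ^ (-β))) *
        (ENNReal.ofReal (t ^ (1 - 2 * β - p)) * A t)) t := by
    by_cases ht : t ∈ Ioo (0 : ℝ) (3/4)
    · have hind : (fun w => Ψ (w, t)) = (Ioo 0 t).indicator fun w => k w t * A t := by
        funext w
        simp only [hΨ, hS, indicator, mem_ofPred_eq, mem_Ioo, ht.2, and_true]
      rw [hind, lintegral_indicator measurableSet_Ioo, lintegral_mul_const _ (by fun_prop),
        lintegral_Ioo_rpow_mul_rpow_sub ht.1, indicator_of_mem ht, mul_assoc]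
    · have hzero : (fun w => Ψ (w, t)) = fun _ => 0 := by
        funext w
        refine indicator_of_notMem (fun hw => ht ⟨hw.1.1.trans hw.1.2, hw.2⟩) _
      rw [hzero, indicator_of_notMem ht, lintegral_zero]
  calc _ = ∫⁻ x in domainD, Ψ (x.2, x.2 - x.1) :=
        setLIntegral_congr_fun measurableSet_domainD hpt
    _ ≤ ∫⁻ x : ℝ × ℝ, Ψ (x.2, x.2 - x.1) := setLIntegral_le_lintegral _ _
    _ = ∫⁻ w, ∫⁻ v, Ψ (w, w - v) := by
        rw [Measure.volume_eq_prod, lintegral_prod_symm' _ (by fun_prop)]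
    _ = ∫⁻ w, ∫⁻ t, Ψ (w, t) :=
        lintegral_congr fun w => lintegral_sub_left_eq_self (fun t => Ψ (w, t)) w
    _ = ∫⁻ t, ∫⁻ w, Ψ (w, t) := lintegral_lintegral_swap (by fun_prop)
    _ = _ := by
        simp only [hinner]
        rw [lintegral_indicator measurableSet_Ioo, lintegral_const_mul _ (by fun_prop)]

/-- The triple integral is controlled by the Slobodeckii seminorm alone, with a beta integral as
constant. -/
lemma triple_integral_le_sobSemiPow {n : ℕ} {p q : ℝ} (hq : 1 < q)
    (hp : 2/3 * q + 1 < p) {f f' : ℝ → EuclideanSpace ℝ (Fin n)} (hf : CurvePair f f')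
    (hfin : sobSemiPow ((3*p - 2*q - 2)/q) q f' < ⊤) :
    (∫⁻ u in Ico (0:ℝ) 1, ∫⁻ x in domainD,
      ENNReal.ofReal
        (‖x.2⁻¹ • (f (u + x.2) - f u) - x.1⁻¹ • (f (u + x.1) - f u)‖ ^ q /
          (|x.2| ^ (p - q) * |x.1| ^ (p - q) * |x.1 - x.2| ^ p))) ≤
      (∫⁻ x in Ioo (0 : ℝ) 1, ENNReal.ofReal (x ^ (-(p - q)) * (1 - x) ^ (-(p - q)))) *
        sobSemiPow ((3*p - 2*q - 2)/q) q f' := by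
  have hq0 : 0 < q := by linarith
  have hexp : 1 + q * ((3*p - 2*q - 2)/q) = 3*p - 2*q - 1 := by
    rw [mul_div_cancel₀ _ hq0.ne']
    ring
  have hg := hf.meas'
  have hloc := intervalIntegrable_of_sobSemiPow_lt_top hq.le (by rw [hexp]; linarith) hg
    hf.periodic' hfin
  set K : ℝ × ℝ → ℝ≥0∞ := fun x =>
    ENNReal.ofReal (|x.2| ^ (p - q) * |x.1| ^ (p - q) * |x.1 - x.2| ^ p)⁻¹ with hK
  have hKm : Measurable K := by fun_prop
  have hH := measurable_diffModulus q hg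
  have hjensen (u : ℝ) (x : ℝ × ℝ) (hx : x ∈ domainD) :
      ENNReal.ofReal (‖x.2⁻¹ • (f (u + x.2) - f u) - x.1⁻¹ • (f (u + x.1) - f u)‖ ^ q /
          (|x.2| ^ (p - q) * |x.1| ^ (p - q) * |x.1 - x.2| ^ p))
        ≤ ∫⁻ θ in Ioo (0 : ℝ) 1, K x * ‖f' (u + x.2 * θ) - f' (u + x.1 * θ)‖ₑ ^ q := by
    rw [ofReal_norm_rpow_div hq0.le, hf.inv_smul_sub_eq_integral hloc u hx.2.1.1.ne',
      hf.inv_smul_sub_eq_integral hloc u hx.1.2.ne, ← integral_sub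
        (integrableOn_comp_add_mul hloc _ _) (integrableOn_comp_add_mul hloc _ _),
      lintegral_const_mul _ (by fun_prop)]
    gcongr
    exact enorm_integral_rpow_le hq.le (Measurable.aestronglyMeasurable (by fun_prop))
  have hmeas : Measurable fun y : (ℝ × ℝ × ℝ) × ℝ =>
      K y.1.2 * ‖f' (y.1.1 + y.1.2.2 * y.2) - f' (y.1.1 + y.1.2.1 * y.2)‖ₑ ^ q := by fun_prop
  calc _ ≤ ∫⁻ u in Ico (0:ℝ) 1, ∫⁻ x in domainD,
        ∫⁻ θ in Ioo (0 : ℝ) 1, K x * ‖f' (u + x.2 * θ) - f' (u + x.1 * θ)‖ₑ ^ q :=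
        lintegral_mono fun u => setLIntegral_mono' measurableSet_domainD (hjensen u)
    _ = ∫⁻ x in domainD, ∫⁻ u in Ico (0:ℝ) 1,
        ∫⁻ θ in Ioo (0 : ℝ) 1, K x * ‖f' (u + x.2 * θ) - f' (u + x.1 * θ)‖ₑ ^ q :=
        lintegral_lintegral_swap hmeas.lintegral_prod_right'.aemeasurable
    _ = ∫⁻ x in domainD, K x * ∫⁻ θ in Ioo (0 : ℝ) 1, diffModulus q f' (θ * (x.2 - x.1)) := by
        refine lintegral_congr fun x => ?_
        rw [lintegral_lintegral_swap (by fun_prop), ← lintegral_const_mul _ (by fun_prop)]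
        refine lintegral_congr fun θ => ?_
        rw [lintegral_const_mul _ (by fun_prop),
          lintegral_sub_rpow_eq_diffModulus q hf.periodic' (x.2 * θ) (x.1 * θ)]
        ring_nf
    _ ≤ _ := by
        refine (setLIntegral_domainD_le (p - q) p
          (A := fun t => ∫⁻ θ in Ioo (0 : ℝ) 1, diffModulus q f' (θ * t)) ?_).trans ?_
        · exact Measurable.lintegral_prod_right'
            (f := fun y : ℝ × ℝ => diffModulus q f' (y.2 * y.1)) (by fun_prop)
        gcongr
        refine le_trans ?_ (lintegral_rpow_mul_diffModulus_le hq0.le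
          (by rw [hexp]; linarith) hg hf.periodic')
        rw [hexp, show 1 - 2 * (p - q) - p = -(3*p - 2*q - 1) by ring]
        exact lintegral_rpow_mul_average_le (by linarith) _ hH

lemma toReal_sobSemiPow_le_sobNorm_rpow {n : ℕ} (s : ℝ) {q : ℝ} (hq : 0 < q)
    (f f' : ℝ → EuclideanSpace ℝ (Fin n)) :
    (sobSemiPow s q f').toReal ≤ sobNorm s q f f' ^ q := by
  have h1 : 0 ≤ (∫ u in Ico (0:ℝ) 1, ‖f u‖ ^ q) ^ (1/q) :=
    Real.rpow_nonneg (integral_nonneg fun u => by positivity) _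
  have h2 : 0 ≤ (∫ u in Ico (0:ℝ) 1, ‖f' u‖ ^ q) ^ (1/q) :=
    Real.rpow_nonneg (integral_nonneg fun u => by positivity) _
  calc (sobSemiPow s q f').toReal = ((sobSemiPow s q f').toReal ^ (1/q)) ^ q := by
        rw [← Real.rpow_mul ENNReal.toReal_nonneg, one_div_mul_cancel hq.ne', Real.rpow_one]
    _ ≤ _ := by
        refine Real.rpow_le_rpow (by positivity) ?_ hq.le
        unfold sobNorm
        linarith

/-- **A triple-integral estimate for Sobolev functions.** In the sub-critical
range `q > 1`, `(2/3)q + 1 < p < q + 2/3`, there is a constant `C = C(p,q)`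
such that for every `f ∈ W^{(3p-2)/q-1,q}(ℝ/ℤ,ℝⁿ)`
`∭_{ℝ/ℤ×D} |Δ_w f/w - Δ_v f/v|^q / (|w|^{p-q} |v|^{p-q} |v-w|^p)
  ≤ C ‖f‖^q_{W^{(3p-2)/q-1,q}}`. -/
theorem triple_integral_estimate (n : ℕ) (p q : ℝ)
    (hq : 1 < q) (hp₁ : 2/3 * q + 1 < p) (hp₂ : p < q + 2/3) :
    ∃ C : ℝ, 0 < C ∧
      ∀ f f' : ℝ → EuclideanSpace ℝ (Fin n),
        CurvePair f f' → sobSemiPow ((3*p - 2*q - 2)/q) q f' < ⊤ →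
        (∫⁻ u in Ico (0:ℝ) 1, ∫⁻ x in domainD,
            ENNReal.ofReal
              (‖x.2⁻¹ • (f (u + x.2) - f u) - x.1⁻¹ • (f (u + x.1) - f u)‖ ^ q /
                (|x.2| ^ (p - q) * |x.1| ^ (p - q) * |x.1 - x.2| ^ p))) ≤
          ENNReal.ofReal (C * sobNorm ((3*p - 2*q - 2)/q) q f f' ^ q) := by
  set B := ∫⁻ x in Ioo (0 : ℝ) 1, ENNReal.ofReal (x ^ (-(p - q)) * (1 - x) ^ (-(p - q)))
  have hB : B < ⊤ := lintegral_beta_lt_top (by linarith)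
  refine ⟨B.toReal + 1, by positivity, fun f f' hf hfin => ?_⟩
  have hq0 : 0 < q := by linarith
  refine (triple_integral_le_sobSemiPow hq hp₁ hf hfin).trans ?_
  rw [← ENNReal.ofReal_toReal (ENNReal.mul_ne_top hB.ne hfin.ne), ENNReal.toReal_mul]
  exact ENNReal.ofReal_le_ofReal (mul_le_mul (by linarith)
    (toReal_sobSemiPow_le_sobNorm_rpow _ hq0 f f') ENNReal.toReal_nonneg (by positivity))
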